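/- arXiv:1512.04041 — 2 statements merged into one kernel-verified Lean document; each statement's English description precedes it below -/
import Mathlib

section
/- For r, s ≥ 1, consider an ultimately periodic continued fraction ξ = [0, a_1, …, a_r, \overline{a_{r+1}, …, a_{r+s}}] ∈ F_q((T^{-1})) with a_r ≠ a_{r+s} (all partial quotients in F_q[T] of degree ≥ 1), and let (p_n/q_n)_{n≥0} be its convergents. Then ξ is quadratic, and min(|a_r|, |a_{r+s}|)/|q_r|² ≤ |ξ − ξ'| ≤ |a_r a_{r+s}|/|q_r|², where ξ' is the Galois conjugate of ξ. -/
open Polynomial Filter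
open scoped ENNReal

noncomputable section

namespace Ooto

variable (Fq : Type) [Field Fq] [Fintype Fq]

/-- `F_q((T⁻¹))`, realized as formal Laurent series in the variable `X = T⁻¹`. -/
abbrev K := LaurentSeries Fq

/-- The element `T = X⁻¹` of `F_q((T⁻¹))`. -/
def TT : K Fq := HahnSeries.single (-1 : ℤ) (1 : Fq)

/-- The natural embedding of `F_q[T]` into `F_q((T⁻¹))`, sending `T` to `T`. -/
def polyToK : Polynomial Fq →+* K Fq := Polynomial.eval₂RingHom HahnSeries.C (TT Fq)

open Classical in
/-- The absolute value on `F_q((T⁻¹))`: `|0| = 0` and `|ξ| = q^{-N}` where `N` is the order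
of `ξ` as a series in `T⁻¹`. -/
def kabs (f : K Fq) : ℝ := if f = 0 then 0 else (Fintype.card Fq : ℝ) ^ (-f.order)

/-- A fixed algebraic closure of `F_q((T⁻¹))`. -/
abbrev L := AlgebraicClosure (K Fq)

def toL : K Fq →+* L Fq := algebraMap (K Fq) (L Fq)

def φ : Polynomial Fq →+* L Fq := (toL Fq).comp (polyToK Fq)

/-- Evaluation of `P ∈ (F_q[T])[X]` at `ξ ∈ F_q((T⁻¹))`. -/
def evalK (P : Polynomial (Polynomial Fq)) (ξ : K Fq) : K Fq :=
  Polynomial.eval₂ (polyToK Fq) ξ P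

/-- Evaluation of `P ∈ (F_q[T])[X]` at a point of the algebraic closure. -/
def evalL (P : Polynomial (Polynomial Fq)) (α : L Fq) : L Fq :=
  Polynomial.eval₂ (φ Fq) α P

/-- Height of a polynomial over `F_q[T]`: the maximum of the absolute values of its
coefficients. -/
def Hpoly (P : Polynomial (Polynomial Fq)) : ℝ := ⨆ i : ℕ, kabs Fq (polyToK Fq (P.coeff i))

/-- `P` is the minimal polynomial of `α`: a non-constant irreducible primitive polynomial in
`(F_q[T])[X]` whose leading coefficient is monic in `T`, vanishing at `α`. -/
def IsMinPolyOf (P : Polynomial (Polynomial Fq)) (α : L Fq) : Prop :=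
  0 < P.natDegree ∧ Irreducible P ∧ P.IsPrimitive ∧ (P.leadingCoeff).Monic ∧ evalL Fq P α = 0

/-- `α` is algebraic over `F_q(T)`. -/
def IsAlgElem (α : L Fq) : Prop := ∃ P, IsMinPolyOf Fq P α

open Classical in
/-- The minimal polynomial of an algebraic element (junk value `0` otherwise). -/
def minPolyPrim (α : L Fq) : Polynomial (Polynomial Fq) :=
  if h : IsAlgElem Fq α then h.choose else 0

/-- Degree of an algebraic element. -/
def degAlg (α : L Fq) : ℕ := (minPolyPrim Fq α).natDegree

/-- Height of an algebraic element. -/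
def heightAlg (α : L Fq) : ℝ := Hpoly Fq (minPolyPrim Fq α)

/-- Inseparable degree of a polynomial `P ∈ (F_q[T])[X]`: the largest power `f = p^j` of the
characteristic such that `P(X) = R(X^f)` for some `R`. -/
def insepDeg (P : Polynomial (Polynomial Fq)) : ℕ :=
  (ringChar Fq) ^ sSup {j : ℕ | ∃ R : Polynomial (Polynomial Fq),
    P = R.comp (Polynomial.X ^ (ringChar Fq) ^ j)}

/-- Inseparable degree of an algebraic element. -/
def insepAlg (α : L Fq) : ℕ := insepDeg Fq (minPolyPrim Fq α)

/-- `α'` is the Galois conjugate of the quadratic element `α` (equal to `α` itself in the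
inseparable case): the minimal polynomial of `α` factors as `A(X - α)(X - α')`. -/
def IsConjOf (α' α : L Fq) : Prop :=
  (minPolyPrim Fq α).natDegree = 2 ∧
  (minPolyPrim Fq α).map (φ Fq) =
    Polynomial.C (φ Fq (minPolyPrim Fq α).leadingCoeff) *
      (Polynomial.X - Polynomial.C α) * (Polynomial.X - Polynomial.C α')

/-- `v` is an absolute value on the algebraic closure of `F_q((T⁻¹))` extending `kabs`
(such an extension exists and is unique). -/
structure IsAbsExt (v : L Fq → ℝ) : Prop where
  eq_zero_iff : ∀ x, v x = 0 ↔ x = 0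
  map_mul : ∀ x y, v (x * y) = v x * v y
  add_le : ∀ x y, v (x + y) ≤ max (v x) (v y)
  nonneg : ∀ x, 0 ≤ v x
  extends_kabs : ∀ f : K Fq, v (toL Fq f) = kabs Fq f

/-- The exponent `w_n(ξ)`: the supremum of the real numbers `w` such that
`0 < |P(ξ)| ≤ H(P)^{-w}` for infinitely many `P ∈ (F_q[T])[X]` of degree at most `n`. -/
def wExp (n : ℕ) (ξ : K Fq) : EReal :=
  sSup {x : EReal | ∃ w : ℝ, x = (w : EReal) ∧
    {P : Polynomial (Polynomial Fq) | P.natDegree ≤ n ∧ 0 < kabs Fq (evalK Fq P ξ) ∧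
      kabs Fq (evalK Fq P ξ) ≤ Hpoly Fq P ^ (-w)}.Infinite}

/-- The exponent `w_n^*(ξ)`: the supremum of the real numbers `w` such that
`0 < |ξ - α| ≤ H(α)^{-w-1}` for infinitely many algebraic `α` of degree at most `n`. -/
def wStarExp (v : L Fq → ℝ) (n : ℕ) (ξ : K Fq) : EReal :=
  sSup {x : EReal | ∃ w : ℝ, x = (w : EReal) ∧
    {α : L Fq | IsAlgElem Fq α ∧ degAlg Fq α ≤ n ∧ 0 < v (toL Fq ξ - α) ∧
      v (toL Fq ξ - α) ≤ heightAlg Fq α ^ (-w - 1)}.Infinite}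

/-- `pSeq a n = p_{n-1}`, the numerators of the convergents of `[a 0; a 1, a 2, …]`
(with `p_{-1} = 1`). -/
def pSeq (a : ℕ → Polynomial Fq) : ℕ → Polynomial Fq
  | 0 => 1
  | 1 => a 0
  | (n+2) => a (n+1) * pSeq a (n+1) + pSeq a n

/-- `qSeq a n = q_{n-1}`, the denominators of the convergents of `[a 0; a 1, a 2, …]`
(with `q_{-1} = 0`). -/
def qSeq (a : ℕ → Polynomial Fq) : ℕ → Polynomial Fq
  | 0 => 0
  | 1 => 1
  | (n+2) => a (n+1) * qSeq a (n+1) + qSeq a n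

/-- `ξ` has continued fraction expansion `[a 0; a 1, a 2, …]`: each partial quotient `a n`
(`n ≥ 1`) has degree at least one and `|ξ - p_n/q_n| = |q_n|⁻¹|q_{n+1}|⁻¹` for all `n ≥ 0`. -/
def IsCFOf (ξ : K Fq) (a : ℕ → Polynomial Fq) : Prop :=
  (∀ n, 1 ≤ n → 1 ≤ (a n).natDegree) ∧
  ∀ n : ℕ,
    kabs Fq (ξ - polyToK Fq (pSeq Fq a (n+1)) / polyToK Fq (qSeq Fq a (n+1))) =
      (kabs Fq (polyToK Fq (qSeq Fq a (n+1))) * kabs Fq (polyToK Fq (qSeq Fq a (n+2))))⁻¹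

/-- The sequence of partial quotients of `[0; b 0, b 1, b 2, …]`. -/
def cfA (b : ℕ → Polynomial Fq) : ℕ → Polynomial Fq := fun n => if n = 0 then 0 else b (n - 1)

/-- `qden b n` is the denominator `q_n` of the `n`-th convergent of `[0; b 0, b 1, …]`. -/
def qden (b : ℕ → Polynomial Fq) (n : ℕ) : Polynomial Fq := qSeq Fq (cfA Fq b) (n + 1)

/-- `V^w` for a finite word `V` and a real `w ≥ 0`: `⌊w⌋` copies of `V` followed by the prefix
of `V` of length `⌈(w - ⌊w⌋)|V|⌉`. -/
def wordPow {A : Type*} (V : List A) (w : ℝ) : List A :=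
  (List.replicate ⌊w⌋₊ V).flatten ++ V.take ⌈(w - ⌊w⌋₊) * V.length⌉₊

/-- The finite word `l` is a prefix of the infinite word `b`. -/
def IsPrefixOfSeq {A : Type*} (l : List A) (b : ℕ → A) : Prop :=
  ∀ (i : ℕ) (h : i < l.length), l.get ⟨i, h⟩ = b i

/-- Condition `(*)_ρ` for an infinite word. -/
def SatisfiesCond {A : Type*} (b : ℕ → A) (ρ : ℝ) : Prop :=
  ∃ (U V : ℕ → List A) (w : ℕ → ℝ),
    (∀ n, V n ≠ []) ∧ (∀ n, 0 ≤ w n) ∧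
    (∀ n, IsPrefixOfSeq (U n ++ wordPow (V n) (w n)) b) ∧
    (∀ n, ρ * (((U n).length + (V n).length : ℕ) : ℝ) ≤
      (((U n).length + (wordPow (V n) (w n)).length : ℕ) : ℝ)) ∧
    StrictMono fun n => (wordPow (V n) (w n)).length

/-- The Diophantine exponent of an infinite word: the supremum of the `ρ` such that the word
satisfies Condition `(*)_ρ`. -/
def dioExp {A : Type*} (b : ℕ → A) : EReal :=
  sSup {x : EReal | ∃ ρ : ℝ, x = (ρ : EReal) ∧ SatisfiesCond b ρ}

/-- The complexity function: the number of distinct blocks of `n` consecutive letters. -/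
def complexity {A : Type*} (b : ℕ → A) (n : ℕ) : ℕ∞ :=
  {w : Fin n → A | ∃ i : ℕ, ∀ k : Fin n, w k = b (i + k)}.encard

/-- The infinite word `b` is ultimately periodic. -/
def UltimatelyPeriodic {A : Type*} (b : ℕ → A) : Prop :=
  ∃ N T : ℕ, 0 < T ∧ ∀ n, N ≤ n → b (n + T) = b n

open scoped NNReal Topology

/-!
Put `θ n = q n * ξ - p n`. Since `q`, `p` and `θ` satisfy the recurrence of the partial quotients,
which beyond `r` is invariant under the shift by `s`, the Casoratian of `θ` and its shift is
constant up to sign from `r` on. As `θ` tends to zero the Casoratian vanishes, which is a quadratic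
equation `P(ξ) = 0` over `F_q[T]`. It cannot be replaced by a linear one: `ξ` is irrational because
`θ n` is nonzero and tends to zero.

The minimal polynomial of `ξ` is therefore proportional to `P`, so `ξ - ξ'` is the quotient of
`P'(ξ)` by the leading coefficient of `P`. Both are sums with a single dominant term, which gives
`|ξ - ξ'| = |a_r a_{r+s}| / (|a_{r+s} - a_r| |q_r|²)`; here the denominator is controlled by
`1 ≤ |a_{r+s} - a_r| ≤ max(|a_r|, |a_{r+s}|)`.
-/

section ContinuantRecurrence

variable {R S : Type*} [CommRing R] [CommRing S]

/-- The three-term recurrence of continued fractions with partial quotients `c`, satisfied by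
numerators and denominators of convergents. The indices are those of `pSeq` and `qSeq`: the
convergent `p_n / q_n` sits at `n + 1`. -/
def IsContinuantRec (c x : ℕ → R) : Prop :=
  ∀ n, x (n + 2) = c (n + 1) * x (n + 1) + x n

/-- The Casoratian (discrete Wronskian) of two sequences, which for two solutions of the same
`IsContinuantRec` is constant up to sign. -/
def casoratian (x y : ℕ → R) (n : ℕ) : R :=
  x n * y (n + 1) - x (n + 1) * y n

theorem map_casoratian (f : R →+* S) (x y : ℕ → R) (n : ℕ) :
    f (casoratian x y n) = casoratian (fun n ↦ f (x n)) (fun n ↦ f (y n)) n := by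
  simp only [casoratian, map_sub, map_mul]

namespace IsContinuantRec

variable {c d x y : ℕ → R}

theorem map (hx : IsContinuantRec c x) (f : R →+* S) :
    IsContinuantRec (fun n ↦ f (c n)) (fun n ↦ f (x n)) := fun n ↦ by
  simp only [hx n, map_add, map_mul]

theorem shift (hx : IsContinuantRec c x) (s : ℕ) :
    IsContinuantRec (fun n ↦ c (n + s)) (fun n ↦ x (n + s)) := fun n ↦ by
  simpa only [add_right_comm _ _ s] using hx (n + s)

theorem casoratian_succ (hx : IsContinuantRec c x) (hy : IsContinuantRec d y) (n : ℕ) :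
    casoratian x y (n + 1) =
      (d (n + 1) - c (n + 1)) * (x (n + 1) * y (n + 1)) - casoratian x y n := by
  simp only [casoratian, hx n, hy n]
  ring

theorem casoratian_add (hx : IsContinuantRec c x) (hy : IsContinuantRec d y) {r : ℕ}
    (hcd : ∀ n, r < n → c n = d n) (k : ℕ) :
    casoratian x y (r + k) = (-1) ^ k * casoratian x y r := by
  induction k with
  | zero => simp
  | succ k ih =>
    rw [← add_assoc, casoratian_succ hx hy, ih, hcd _ (by lia)]
    ring

end IsContinuantRec

end ContinuantRecurrence

section Valuation

variable {E : Type*} [Field E]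

section General

variable {Γ₀ : Type*} [LinearOrderedCommGroupWithZero Γ₀]

theorem min_le_mul_div_of_le_max {A B d : Γ₀} (hd : 0 < d) (hmax : d ≤ max A B) :
    min A B ≤ A * B / d := by
  rw [le_div_iff₀ hd, ← min_mul_max A B]
  exact mul_le_mul_right hmax _

variable (w : Valuation E Γ₀) {c d x y : ℕ → E}

namespace IsContinuantRec

theorem valuation_add_two (hx : IsContinuantRec c x) {n : ℕ} (hc : 1 < w (c (n + 1)))
    (hlt : w (x n) < w (x (n + 1))) : w (x (n + 2)) = w (c (n + 1)) * w (x (n + 1)) := by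
  have hdom : w (x n) < w (c (n + 1) * x (n + 1)) := by
    rw [map_mul]
    exact hlt.trans (lt_mul_of_one_lt_left (zero_le.trans_lt hlt) hc)
  rw [hx n, w.map_add_eq_of_lt_left hdom, map_mul]

theorem strictMono_valuation (hx : IsContinuantRec c x) (hc : ∀ n, 1 < w (c (n + 1)))
    (h01 : w (x 0) < w (x 1)) : StrictMono fun n ↦ w (x n) := by
  refine strictMono_nat_of_lt_succ fun n ↦ ?_
  induction n with
  | zero => exact h01
  | succ n ih =>
    rw [hx.valuation_add_two w (hc n) ih]
    exact lt_mul_of_one_lt_left (zero_le.trans_lt ih) (hc n)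

theorem valuation_casoratian_succ (hx : IsContinuantRec c x) (hy : IsContinuantRec d y) {n : ℕ}
    (hxn : w (x n) < w (x (n + 1))) (hyn : w (y n) < w (y (n + 1)))
    (hcd : 1 ≤ w (d (n + 1) - c (n + 1))) :
    w (casoratian x y (n + 1)) =
      w (d (n + 1) - c (n + 1)) * (w (x (n + 1)) * w (y (n + 1))) := by
  have hx0 : 0 < w (x (n + 1)) := zero_le.trans_lt hxn
  have hy0 : 0 < w (y (n + 1)) := zero_le.trans_lt hyn
  have hsmall : w (casoratian x y n) < w (x (n + 1)) * w (y (n + 1)) := by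
    refine w.map_sub_lt ?_ ?_ <;> rw [map_mul]
    · exact mul_lt_mul_of_pos_right hxn hy0
    · exact mul_lt_mul_of_pos_left hyn hx0
  rw [hx.casoratian_succ hy, w.map_sub_eq_of_lt_left, map_mul, map_mul]
  rw [map_mul, map_mul]
  exact hsmall.trans_le (le_mul_of_one_le_left' hcd)

end IsContinuantRec

theorem valuation_casoratian_add_casoratian_shift {q θ : ℕ → E}
    (hq : StrictMono fun n ↦ w (q n)) (hθ : Antitone fun n ↦ w (θ n)) {r s : ℕ} (hs : 0 < s)
    (hθr : θ r ≠ 0) :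
    w (casoratian q (fun n ↦ θ (n + s)) r + casoratian θ (fun n ↦ q (n + s)) r) =
      w (θ r) * w (q (r + 1 + s)) := by
  -- The largest of the `q i` occurs in only one of the four products, next to the largest `θ j`.
  have hdom : ∀ i j, i < r + 1 + s → r ≤ j → w (q i * θ j) < w (θ r * q (r + 1 + s)) := by
    intro i j hi hj
    rw [map_mul, map_mul, mul_comm]
    exact mul_lt_mul_of_le_of_lt_of_nonneg_of_pos (hθ hj) (hq hi) zero_le (w.pos_iff.2 hθr)
  have hsplit : casoratian q (fun n ↦ θ (n + s)) r + casoratian θ (fun n ↦ q (n + s)) r =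
      θ r * q (r + 1 + s) +
        (q r * θ (r + 1 + s) - q (r + 1) * θ (r + s) - q (r + s) * θ (r + 1)) := by
    simp only [casoratian]
    ring
  rw [hsplit, w.map_add_eq_of_lt_left, map_mul]
  exact w.map_sub_lt (w.map_sub_lt (hdom _ _ (by lia) (by lia)) (hdom _ _ (by lia) (by lia)))
    (hdom _ _ (by lia) (by lia))

end General

section Real

variable (w : Valuation E ℝ≥0) {c d x y : ℕ → E}

theorem IsContinuantRec.tendsto_valuation_atTop (hx : IsContinuantRec c x) {B : ℝ≥0}
    (hB : 1 < B) (hc : ∀ n, B ≤ w (c (n + 1))) (h01 : w (x 0) < w (x 1)) :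
    Tendsto (fun n ↦ w (x n)) atTop atTop := by
  have hc1 : ∀ n, 1 < w (c (n + 1)) := fun n ↦ hB.trans_le (hc n)
  have hgrow : ∀ n, B ^ n * w (x 1) ≤ w (x (n + 1)) := by
    intro n
    induction n with
    | zero => simp
    | succ n ih =>
      rw [hx.valuation_add_two w (hc1 n) (hx.strictMono_valuation w hc1 h01 n.lt_succ_self),
        pow_succ', mul_assoc]
      exact mul_le_mul' (hc n) ih
  rw [← tendsto_add_atTop_iff_nat 1]
  exact tendsto_atTop_mono hgrow
    ((tendsto_pow_atTop_atTop_of_one_lt hB).atTop_mul_const (zero_le.trans_lt h01))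

theorem tendsto_valuation_casoratian_zero (hx : Tendsto (fun n ↦ w (x n)) atTop (𝓝 0))
    (hy : Tendsto (fun n ↦ w (y n)) atTop (𝓝 0)) :
    Tendsto (fun n ↦ w (casoratian x y n)) atTop (𝓝 0) := by
  have hx' := (tendsto_add_atTop_iff_nat 1).2 hx
  have hy' := (tendsto_add_atTop_iff_nat 1).2 hy
  have hmax := (hx.mul hy').max (hx'.mul hy)
  rw [zero_mul, max_self] at hmax
  refine tendsto_of_tendsto_of_tendsto_of_le_of_le tendsto_const_nhds hmax (fun _ ↦ zero_le)
    fun n ↦ ?_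
  simpa only [casoratian, map_mul] using w.map_sub (x n * y (n + 1)) (x (n + 1) * y n)

theorem IsContinuantRec.casoratian_eq_zero (hx : IsContinuantRec c x)
    (hy : IsContinuantRec d y) {r : ℕ} (hcd : ∀ n, r < n → c n = d n)
    (hx0 : Tendsto (fun n ↦ w (x n)) atTop (𝓝 0))
    (hy0 : Tendsto (fun n ↦ w (y n)) atTop (𝓝 0)) : casoratian x y r = 0 := by
  have hconst : ∀ k, w (casoratian x y (k + r)) = w (casoratian x y r) := fun k ↦ by
    rw [add_comm, hx.casoratian_add hy hcd, map_mul, map_pow, w.map_neg, map_one, one_pow,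
      one_mul]
  have hlim := (tendsto_add_atTop_iff_nat r).2 (tendsto_valuation_casoratian_zero w hx0 hy0)
  simp only [hconst, tendsto_const_nhds_iff, map_eq_zero] at hlim
  exact hlim

end Real

end Valuation

section LinearForm

variable {R : Type*} [CommRing R]

/-- The linear polynomial `q_n X - p_n`, whose value at `ξ` measures how well `p_n / q_n`
approximates `ξ`. -/
def linForm (q p : ℕ → R) (n : ℕ) : R[X] :=
  C (q n) * X - C (p n)

/-- The polynomial of degree at most two vanishing at a continued fraction with convergents
`p_n / q_n` whose partial quotients have period `s` from index `r + 1` on. -/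
def periodPoly (q p : ℕ → R) (r s : ℕ) : R[X] :=
  casoratian (linForm q p) (fun n ↦ linForm q p (n + s)) r

variable (q p : ℕ → R) (r s n : ℕ)

theorem natDegree_linForm_le : (linForm q p n).natDegree ≤ 1 := by
  unfold linForm
  compute_degree

theorem coeff_one_linForm : (linForm q p n).coeff 1 = q n := by
  simp [linForm, coeff_C]

theorem derivative_linForm : derivative (linForm q p n) = C (q n) := by
  simp [linForm]

theorem natDegree_periodPoly_le : (periodPoly q p r s).natDegree ≤ 2 :=
  natDegree_sub_le_of_le
    (natDegree_mul_le_of_le (natDegree_linForm_le ..) (natDegree_linForm_le ..))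
    (natDegree_mul_le_of_le (natDegree_linForm_le ..) (natDegree_linForm_le ..))

theorem coeff_two_periodPoly :
    (periodPoly q p r s).coeff 2 = casoratian q (fun n ↦ q (n + s)) r := by
  have hmul (i j : ℕ) : (linForm q p i * linForm q p j).coeff (1 + 1) = q i * q j := by
    rw [coeff_mul_add_eq_of_natDegree_le (natDegree_linForm_le ..) (natDegree_linForm_le ..),
      coeff_one_linForm, coeff_one_linForm]
  simp only [periodPoly, casoratian, coeff_sub, hmul]

variable {S : Type*} [CommRing S] (f : R →+* S) (t : S)

theorem eval₂_linForm : (linForm q p n).eval₂ f t = f (q n) * t - f (p n) := by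
  simp [linForm]

theorem IsContinuantRec.eval₂_linForm {c q p : ℕ → R} (hq : IsContinuantRec c q)
    (hp : IsContinuantRec c p) :
    IsContinuantRec (fun n ↦ f (c n)) (fun n ↦ (linForm q p n).eval₂ f t) := fun n ↦ by
  simp only [Ooto.eval₂_linForm, hq n, hp n, map_add, map_mul]
  ring

theorem eval₂_periodPoly : (periodPoly q p r s).eval₂ f t =
    casoratian (fun n ↦ (linForm q p n).eval₂ f t)
      (fun n ↦ (linForm q p (n + s)).eval₂ f t) r :=
  map_casoratian (eval₂RingHom f t) _ _ _

theorem eval₂_derivative_periodPoly : (derivative (periodPoly q p r s)).eval₂ f t =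
    casoratian (fun n ↦ f (q n)) (fun n ↦ (linForm q p (n + s)).eval₂ f t) r +
      casoratian (fun n ↦ (linForm q p n).eval₂ f t) (fun n ↦ f (q (n + s))) r := by
  simp only [periodPoly, casoratian, derivative_sub, derivative_mul, derivative_linForm,
    eval₂_add, eval₂_sub, eval₂_mul, eval₂_C]
  ring

end LinearForm

section Quadratic

variable {R E : Type*} [CommRing R] [Field E] {f : R →+* E} {t : E}

/-- `t` is not a root of a nonzero polynomial of degree at most one over `R`, i.e. it is
irrational with respect to the base ring `R`. -/
def IsIrrationalOver (f : R →+* E) (t : E) : Prop :=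
  ∀ Q : R[X], Q.natDegree ≤ 1 → Q.eval₂ f t = 0 → Q = 0

theorem isIrrationalOver_of_tendsto (w : Valuation E ℝ≥0) (hf : ∀ b, b ≠ 0 → 1 ≤ w (f b))
    {q p : ℕ → R} (hne : ∀ n, (linForm q p n).eval₂ f t ≠ 0)
    (hlim : Tendsto (fun n ↦ w ((linForm q p n).eval₂ f t)) atTop (𝓝 0)) :
    IsIrrationalOver f t := by
  intro Q hdeg hroot
  obtain ⟨b, c, rfl⟩ := exists_eq_X_add_C_of_natDegree_le_one hdeg
  have hbc : f b * t + f c = 0 := by simpa using hroot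
  have hinj : ∀ e, f e = 0 → e = 0 := fun e he ↦ by
    by_contra h
    simpa [he] using hf e h
  have hb : b = 0 := by
    by_contra hb
    -- Up to sign `b * (q n * t - p n)` is `q n * c + p n * b`, a nonzero element of `R`, so it
    -- cannot become small.
    have hlim' := hlim.const_mul (w (f b))
    rw [mul_zero] at hlim'
    obtain ⟨n, hn⟩ := (hlim'.eventually_lt_const one_pos).exists
    have he : f (-(q n * c + p n * b)) = f b * (linForm q p n).eval₂ f t := by
      rw [eval₂_linForm, map_neg, map_add, map_mul, map_mul]
      linear_combination -f (q n) * hbc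
    have hfe : f (-(q n * c + p n * b)) ≠ 0 := by
      rw [he]
      exact mul_ne_zero (fun h ↦ hb (hinj b h)) (hne n)
    have h1 := hf (-(q n * c + p n * b)) fun h ↦ hfe (by rw [h, map_zero])
    rw [he, map_mul] at h1
    exact hn.not_ge h1
  have hc : c = 0 := hinj c (by simpa [hb] using hbc)
  simp [hb, hc]

namespace IsIrrationalOver

theorem map_ne_zero (ht : IsIrrationalOver f t) {b : R} (hb : b ≠ 0) : f b ≠ 0 := fun h ↦
  hb (C_eq_zero.1 (ht (C b) (by simp) (by simpa using h)))

theorem C_coeff_two_mul_eq (ht : IsIrrationalOver f t) {M P : R[X]} (hM : M.natDegree ≤ 2)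
    (hP : P.natDegree ≤ 2) (hMt : M.eval₂ f t = 0) (hPt : P.eval₂ f t = 0) :
    C (P.coeff 2) * M = C (M.coeff 2) * P := by
  refine sub_eq_zero.1 (ht _ (natDegree_le_iff_coeff_eq_zero.2 fun n hn ↦ ?_) ?_)
  · rw [coeff_sub, coeff_C_mul, coeff_C_mul]
    obtain rfl | hn' : n = 2 ∨ 2 < n := by lia
    · ring
    · rw [coeff_eq_zero_of_natDegree_lt (hM.trans_lt hn'),
        coeff_eq_zero_of_natDegree_lt (hP.trans_lt hn'), mul_zero, mul_zero, sub_zero]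
  · simp only [eval₂_sub, eval₂_mul, hMt, hPt, mul_zero, sub_zero]

theorem map_coeff_two_mul_sub_conj (ht : IsIrrationalOver f t) {M P : R[X]} {t' : E}
    (hM : M.natDegree = 2)
    (hfactor : M.map f = C (f M.leadingCoeff) * (X - C t) * (X - C t'))
    (hP : P.natDegree ≤ 2) (hPt : P.eval₂ f t = 0) :
    f (P.coeff 2) * (t - t') = (derivative P).eval₂ f t := by
  have hlead : f M.leadingCoeff ≠ 0 :=
    ht.map_ne_zero (leadingCoeff_ne_zero.2 (ne_zero_of_natDegree_gt (n := 1) (by lia)))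
  have hMt : M.eval₂ f t = 0 := by
    rw [← eval_map, hfactor]
    simp
  have hM' : (derivative M).eval₂ f t = f M.leadingCoeff * (t - t') := by
    rw [← eval_map, ← derivative_map, hfactor]
    simp [derivative_mul]
  have hprop := congrArg (fun Q ↦ (derivative Q).eval₂ f t)
    (ht.C_coeff_two_mul_eq hM.le hP hMt hPt)
  simp only [derivative_C_mul, eval₂_mul, eval₂_C, hM', ← hM, coeff_natDegree] at hprop
  rw [hM] at hprop
  exact mul_left_cancel₀ hlead (by linear_combination hprop)

end IsIrrationalOver

end Quadratic

open UniqueFactorizationMonoid in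
theorem exists_mem_normalizedFactors_map_eq_zero {A B : Type*} [CommMonoidWithZero A]
    [UniqueFactorizationMonoid A] [NormalizationMonoid A] [CommMonoidWithZero B]
    [NoZeroDivisors B] [Nontrivial B] (f : A →*₀ B) {a : A} (ha : a ≠ 0) (hfa : f a = 0) :
    ∃ p ∈ normalizedFactors a, f p = 0 := by
  obtain ⟨u, hu⟩ := prod_normalizedFactors ha
  have hprod : f (normalizedFactors a).prod = 0 := by
    rw [← hu, map_mul] at hfa
    exact (mul_eq_zero.1 hfa).resolve_right (u.isUnit.map f).ne_zero
  rwa [map_multiset_prod, Multiset.prod_eq_zero_iff, Multiset.mem_map] at hprod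

section FunctionField

variable {Fq : Type} [Field Fq]

open UniqueFactorizationMonoid in
theorem IsIrrationalOver.exists_isMinPolyOf {α : L Fq} (hα : IsIrrationalOver (φ Fq) α)
    {P : Fq[X][X]} (hP : P ≠ 0) (hdeg : P.natDegree ≤ 2) (hroot : evalL Fq P α = 0) :
    ∃ M, IsMinPolyOf Fq M α ∧ M.natDegree = 2 := by
  classical
  obtain ⟨M, hM, hMα⟩ := exists_mem_normalizedFactors_map_eq_zero
    (eval₂RingHom (φ Fq) α).toMonoidWithZeroHom hP hroot
  have hirr : Irreducible M := irreducible_of_normalized_factor M hM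
  have hM2 : M.natDegree = 2 := by
    have hle := (natDegree_le_of_dvd (dvd_of_mem_normalizedFactors hM) hP).trans hdeg
    have hgt : ¬ M.natDegree ≤ 1 := fun h ↦ hirr.ne_zero (hα M h hMα)
    lia
  have hmonic : M.leadingCoeff.Monic := by
    rw [← normalize_normalized_factor M hM, leadingCoeff_normalize]
    exact monic_normalize (leadingCoeff_ne_zero.2 hirr.ne_zero)
  exact ⟨M, ⟨by lia, hirr, hirr.isPrimitive (by lia), hmonic, hMα⟩, hM2⟩

theorem polyToK_C (b : Fq) : polyToK Fq (C b) = algebraMap Fq (K Fq) b := by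
  rw [polyToK, coe_eval₂RingHom, eval₂_C]
  exact (LaurentSeries.algebraMap_apply Fq b).symm

theorem polyToK_X : polyToK Fq X = TT Fq := by
  simp [polyToK]

theorem φ_eq_aeval (b : Fq[X]) : φ Fq b = aeval (φ Fq X) b := by
  have hhom : φ Fq = (aeval (φ Fq X)).toRingHom := by
    ext c
    · simp only [φ, RingHom.comp_apply, polyToK_C, AlgHom.toRingHom_eq_coe, RingHom.coe_coe,
        aeval_C, IsScalarTower.algebraMap_apply Fq (K Fq) (L Fq), toL]
    · simp
  exact congrArg (· b) hhom

theorem isContinuantRec_pSeq (a : ℕ → Fq[X]) : IsContinuantRec a (pSeq Fq a) := fun _ ↦ rfl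

theorem isContinuantRec_qSeq (a : ℕ → Fq[X]) : IsContinuantRec a (qSeq Fq a) := fun _ ↦ rfl

variable [Fintype Fq]

theorem kabs_TT : kabs Fq (TT Fq) = Fintype.card Fq := by
  rw [kabs, TT, if_neg (by simp), HahnSeries.order_single one_ne_zero, neg_neg, zpow_one]

variable {v : L Fq → ℝ}

/-- An absolute value on the algebraic closure as a valuation with values in `ℝ≥0`, which gives
access to the ultrametric calculus of `Valuation`. -/
def IsAbsExt.toValuation (hv : IsAbsExt Fq v) : Valuation (L Fq) ℝ≥0 where
  toFun x := ⟨v x, hv.nonneg x⟩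
  map_zero' := Subtype.ext ((hv.eq_zero_iff 0).2 rfl)
  map_one' := Subtype.ext (by
    have h1 : v 1 ≠ 0 := (hv.eq_zero_iff 1).not.2 one_ne_zero
    exact mul_left_cancel₀ h1 (by rw [← hv.map_mul]; simp))
  map_mul' x y := Subtype.ext (hv.map_mul x y)
  map_add_le_max' x y := hv.add_le x y

namespace IsAbsExt

theorem coe_toValuation (hv : IsAbsExt Fq v) (x : L Fq) : (hv.toValuation x : ℝ) = v x := rfl

theorem coe_toValuation_φ (hv : IsAbsExt Fq v) (b : Fq[X]) :
    (hv.toValuation (φ Fq b) : ℝ) = kabs Fq (polyToK Fq b) :=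
  hv.extends_kabs _

theorem toValuation_φ (hv : IsAbsExt Fq v) {b : Fq[X]} (hb : b ≠ 0) :
    hv.toValuation (φ Fq b) = (Fintype.card Fq : ℝ≥0) ^ b.natDegree := by
  have hX : hv.toValuation (φ Fq X) = (Fintype.card Fq : ℝ≥0) :=
    NNReal.coe_injective (by simp [coe_toValuation_φ, polyToK_X, kabs_TT])
  have hcard : 1 < (Fintype.card Fq : ℝ≥0) := mod_cast Fintype.one_lt_card
  rw [φ_eq_aeval, valuation_aeval_eq_valuation_X_pow_natDegree_of_one_lt_valuation_X, hX]
  · rwa [hX]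
  · exact hb

theorem one_le_toValuation_φ (hv : IsAbsExt Fq v) {b : Fq[X]} (hb : b ≠ 0) :
    1 ≤ hv.toValuation (φ Fq b) := by
  rw [hv.toValuation_φ hb]
  exact one_le_pow₀ (mod_cast Fintype.card_pos)

end IsAbsExt

namespace IsCFOf

variable {ξ : K Fq} {a : ℕ → Fq[X]} (hξ : IsCFOf Fq ξ a) (hv : IsAbsExt Fq v)
include hξ

theorem card_le_toValuation_φ {n : ℕ} (hn : 1 ≤ n) :
    (Fintype.card Fq : ℝ≥0) ≤ hv.toValuation (φ Fq (a n)) := by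
  have hdeg := hξ.1 n hn
  rw [hv.toValuation_φ (ne_zero_of_natDegree_gt hdeg)]
  exact le_self_pow₀ (mod_cast Fintype.card_pos) (by lia)

theorem one_lt_toValuation_φ {n : ℕ} (hn : 1 ≤ n) : 1 < hv.toValuation (φ Fq (a n)) :=
  (mod_cast Fintype.one_lt_card : (1 : ℝ≥0) < Fintype.card Fq).trans_le
    (hξ.card_le_toValuation_φ hv hn)

theorem strictMono_toValuation_qSeq : StrictMono fun n ↦ hv.toValuation (φ Fq (qSeq Fq a n)) :=
  ((isContinuantRec_qSeq a).map (φ Fq)).strictMono_valuation hv.toValuation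
    (fun n ↦ hξ.one_lt_toValuation_φ hv n.succ_pos) (by simp [qSeq])

theorem tendsto_toValuation_qSeq :
    Tendsto (fun n ↦ hv.toValuation (φ Fq (qSeq Fq a n))) atTop atTop :=
  ((isContinuantRec_qSeq a).map (φ Fq)).tendsto_valuation_atTop hv.toValuation
    (mod_cast Fintype.one_lt_card) (fun n ↦ hξ.card_le_toValuation_φ hv n.succ_pos) (by simp [qSeq])

theorem toValuation_qSeq_pos {n : ℕ} (hn : 1 ≤ n) : 0 < hv.toValuation (φ Fq (qSeq Fq a n)) :=
  zero_le.trans_lt (hξ.strictMono_toValuation_qSeq hv hn)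

theorem toValuation_qSeq_succ {n : ℕ} (hn : 1 ≤ n) : hv.toValuation (φ Fq (qSeq Fq a (n + 1))) =
    hv.toValuation (φ Fq (a n)) * hv.toValuation (φ Fq (qSeq Fq a n)) := by
  obtain ⟨n, rfl⟩ := Nat.exists_eq_add_of_le' hn
  exact ((isContinuantRec_qSeq a).map (φ Fq)).valuation_add_two hv.toValuation
    (hξ.one_lt_toValuation_φ hv n.succ_pos) (hξ.strictMono_toValuation_qSeq hv n.lt_succ_self)

theorem toValuation_eval₂_linForm (n : ℕ) :
    hv.toValuation ((linForm (qSeq Fq a) (pSeq Fq a) n).eval₂ (φ Fq) (toL Fq ξ)) =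
      (hv.toValuation (φ Fq (qSeq Fq a (n + 1))))⁻¹ := by
  rw [eval₂_linForm]
  cases n with
  | zero => simp [qSeq, pSeq, Valuation.map_neg]
  | succ n =>
    have hq := hξ.toValuation_qSeq_pos hv n.succ_pos
    have hq0 : φ Fq (qSeq Fq a (n + 1)) ≠ 0 := (hv.toValuation.pos_iff).1 hq
    have hfactor : φ Fq (qSeq Fq a (n + 1)) * toL Fq ξ - φ Fq (pSeq Fq a (n + 1)) =
        φ Fq (qSeq Fq a (n + 1)) * toL Fq
          (ξ - polyToK Fq (pSeq Fq a (n + 1)) / polyToK Fq (qSeq Fq a (n + 1))) := by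
      rw [map_sub, map_div₀, mul_sub]
      exact congrArg _ (mul_div_cancel₀ _ hq0).symm
    have hdist : hv.toValuation (toL Fq
        (ξ - polyToK Fq (pSeq Fq a (n + 1)) / polyToK Fq (qSeq Fq a (n + 1)))) =
          (hv.toValuation (φ Fq (qSeq Fq a (n + 1))) *
            hv.toValuation (φ Fq (qSeq Fq a (n + 2))))⁻¹ :=
      NNReal.coe_injective <| by
        push_cast
        rw [hv.coe_toValuation_φ, hv.coe_toValuation_φ, hv.coe_toValuation, hv.extends_kabs, hξ.2]
    rw [hfactor, map_mul, hdist, mul_inv, mul_inv_cancel_left₀ hq.ne']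

include hv in
theorem eval₂_linForm_ne_zero (n : ℕ) :
    (linForm (qSeq Fq a) (pSeq Fq a) n).eval₂ (φ Fq) (toL Fq ξ) ≠ 0 := by
  rw [← hv.toValuation.pos_iff, hξ.toValuation_eval₂_linForm]
  exact inv_pos.2 (hξ.toValuation_qSeq_pos hv n.succ_pos)

theorem tendsto_toValuation_eval₂_linForm : Tendsto
    (fun n ↦ hv.toValuation ((linForm (qSeq Fq a) (pSeq Fq a) n).eval₂ (φ Fq) (toL Fq ξ)))
    atTop (𝓝 0) := by
  simp only [hξ.toValuation_eval₂_linForm]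
  exact tendsto_inv_atTop_zero.comp
    ((tendsto_add_atTop_iff_nat 1).2 (hξ.tendsto_toValuation_qSeq hv))

theorem antitone_toValuation_eval₂_linForm : Antitone
    fun n ↦ hv.toValuation ((linForm (qSeq Fq a) (pSeq Fq a) n).eval₂ (φ Fq) (toL Fq ξ)) := by
  intro m n hmn
  simp only [hξ.toValuation_eval₂_linForm]
  exact inv_anti₀ (hξ.toValuation_qSeq_pos hv m.succ_pos)
    ((hξ.strictMono_toValuation_qSeq hv).monotone (Nat.succ_le_succ hmn))

include hv in
theorem isIrrationalOver : IsIrrationalOver (φ Fq) (toL Fq ξ) :=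
  isIrrationalOver_of_tendsto hv.toValuation (fun _ ↦ hv.one_le_toValuation_φ)
    (hξ.eval₂_linForm_ne_zero hv) (hξ.tendsto_toValuation_eval₂_linForm hv)

variable {r s : ℕ}

include hv in
theorem eval₂_periodPoly_eq_zero (hper : ∀ n, r < n → a (n + s) = a n) :
    (periodPoly (qSeq Fq a) (pSeq Fq a) r s).eval₂ (φ Fq) (toL Fq ξ) = 0 := by
  have hrec := (isContinuantRec_qSeq a).eval₂_linForm (φ Fq) (toL Fq ξ) (isContinuantRec_pSeq a)
  have hlim := hξ.tendsto_toValuation_eval₂_linForm hv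
  rw [eval₂_periodPoly]
  exact hrec.casoratian_eq_zero hv.toValuation (hrec.shift s)
    (fun n hn ↦ congrArg (φ Fq) (hper n hn).symm) hlim ((tendsto_add_atTop_iff_nat s).2 hlim)

theorem toValuation_coeff_two_periodPoly (hr : 1 ≤ r) (hne : a r ≠ a (r + s)) :
    hv.toValuation (φ Fq ((periodPoly (qSeq Fq a) (pSeq Fq a) r s).coeff 2)) =
      hv.toValuation (φ Fq (a (r + s) - a r)) *
        (hv.toValuation (φ Fq (qSeq Fq a r)) * hv.toValuation (φ Fq (qSeq Fq a (r + s)))) := by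
  obtain ⟨r, rfl⟩ := Nat.exists_eq_add_of_le' hr
  have hrec := (isContinuantRec_qSeq a).map (φ Fq)
  have hq := hξ.strictMono_toValuation_qSeq hv
  rw [coeff_two_periodPoly, map_casoratian, map_sub]
  refine hrec.valuation_casoratian_succ hv.toValuation (hrec.shift s) (hq r.lt_succ_self)
    (hq (by lia)) ?_
  rw [← map_sub]
  exact hv.one_le_toValuation_φ (sub_ne_zero.2 hne.symm)

include hv in
theorem periodPoly_ne_zero (hr : 1 ≤ r) (hne : a r ≠ a (r + s)) :
    periodPoly (qSeq Fq a) (pSeq Fq a) r s ≠ 0 := fun h ↦ by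
  have hlead : 0 < hv.toValuation (φ Fq ((periodPoly (qSeq Fq a) (pSeq Fq a) r s).coeff 2)) := by
    rw [hξ.toValuation_coeff_two_periodPoly hv hr hne]
    exact mul_pos (one_pos.trans_le (hv.one_le_toValuation_φ (sub_ne_zero.2 hne.symm)))
      (mul_pos (hξ.toValuation_qSeq_pos hv hr) (hξ.toValuation_qSeq_pos hv (by lia)))
  simp [h] at hlead

theorem toValuation_sub_conj (hr : 1 ≤ r) (hper : ∀ n, r < n → a (n + s) = a n)
    (hne : a r ≠ a (r + s)) {ξ' : L Fq} (hconj : IsConjOf Fq ξ' (toL Fq ξ)) :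
    hv.toValuation (toL Fq ξ - ξ') =
      hv.toValuation (φ Fq (a r)) * hv.toValuation (φ Fq (a (r + s))) /
        hv.toValuation (φ Fq (a (r + s) - a r)) /
          hv.toValuation (φ Fq (qSeq Fq a (r + 1))) ^ 2 := by
  have hs : 0 < s := by
    rw [Nat.pos_iff_ne_zero]
    rintro rfl
    exact hne rfl
  have hroot := hξ.eval₂_periodPoly_eq_zero hv hper
  have hprod := congrArg hv.toValuation ((hξ.isIrrationalOver hv).map_coeff_two_mul_sub_conj
    hconj.1 hconj.2 (natDegree_periodPoly_le ..) hroot)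
  rw [eval₂_derivative_periodPoly, map_mul, hξ.toValuation_coeff_two_periodPoly hv hr hne,
    valuation_casoratian_add_casoratian_shift hv.toValuation
      (q := fun n ↦ φ Fq (qSeq Fq a n)) (hξ.strictMono_toValuation_qSeq hv)
      (hξ.antitone_toValuation_eval₂_linForm hv) hs (hξ.eval₂_linForm_ne_zero hv r),
    hξ.toValuation_eval₂_linForm] at hprod
  have ha0 := (one_pos.trans (hξ.one_lt_toValuation_φ hv hr)).ne'
  have hr0 := (hξ.toValuation_qSeq_pos hv hr).ne'
  have hrs0 := (hξ.toValuation_qSeq_pos hv (n := r + s) (by lia)).ne'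
  have hd0 := (one_pos.trans_le (hv.one_le_toValuation_φ (sub_ne_zero.2 hne.symm))).ne'
  rw [add_right_comm, hξ.toValuation_qSeq_succ hv (n := r + s) (by lia),
    hξ.toValuation_qSeq_succ hv hr] at hprod
  rw [hξ.toValuation_qSeq_succ hv hr]
  field_simp at hprod ⊢
  exact hprod

end IsCFOf

theorem stmt12_general {v : L Fq → ℝ} (hv : IsAbsExt Fq v) {a : ℕ → Fq[X]} {r s : ℕ}
    (hr : 1 ≤ r) (hper : ∀ n, r < n → a (n + s) = a n) (hne : a r ≠ a (r + s)) {ξ : K Fq}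
    (hξ : IsCFOf Fq ξ a) :
    (∃ P, IsMinPolyOf Fq P (toL Fq ξ) ∧ P.natDegree = 2) ∧
    ∀ ξ' : L Fq, IsConjOf Fq ξ' (toL Fq ξ) →
      min (kabs Fq (polyToK Fq (a r))) (kabs Fq (polyToK Fq (a (r + s)))) /
          kabs Fq (polyToK Fq (qSeq Fq a (r + 1))) ^ 2 ≤ v (toL Fq ξ - ξ') ∧
      v (toL Fq ξ - ξ') ≤ kabs Fq (polyToK Fq (a r * a (r + s))) /
          kabs Fq (polyToK Fq (qSeq Fq a (r + 1))) ^ 2 := by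
  refine ⟨(hξ.isIrrationalOver hv).exists_isMinPolyOf (hξ.periodPoly_ne_zero hv hr hne)
    (natDegree_periodPoly_le ..) (hξ.eval₂_periodPoly_eq_zero hv hper), fun ξ' hconj ↦ ?_⟩
  have hd := hv.one_le_toValuation_φ (sub_ne_zero.2 hne.symm)
  have hmax : hv.toValuation (φ Fq (a (r + s) - a r)) ≤
      max (hv.toValuation (φ Fq (a r))) (hv.toValuation (φ Fq (a (r + s)))) := by
    rw [map_sub, max_comm]
    exact hv.toValuation.map_sub _ _
  simp only [← hv.coe_toValuation_φ, ← hv.coe_toValuation]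
  norm_cast
  rw [hξ.toValuation_sub_conj hv hr hper hne hconj, map_mul, map_mul]
  constructor
  · gcongr
    exact min_le_mul_div_of_le_max (one_pos.trans_le hd) hmax
  · gcongr
    exact div_le_self zero_le hd

end FunctionField

theorem stmt12 (Fq : Type) [Field Fq] [Fintype Fq]
    (v : L Fq → ℝ) (hv : IsAbsExt Fq v)
    (a : ℕ → Polynomial Fq) (r s : ℕ) (hr : 1 ≤ r) (hs : 1 ≤ s) (ha0 : a 0 = 0)
    (hper : ∀ n : ℕ, r < n → a (n + s) = a n) (hne : a r ≠ a (r + s))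
    (ξ : K Fq) (hξ : IsCFOf Fq ξ a) :
    (∃ P, IsMinPolyOf Fq P (toL Fq ξ) ∧ P.natDegree = 2) ∧
    ∀ ξ' : L Fq, IsConjOf Fq ξ' (toL Fq ξ) →
      min (kabs Fq (polyToK Fq (a r))) (kabs Fq (polyToK Fq (a (r + s)))) /
          kabs Fq (polyToK Fq (qSeq Fq a (r + 1))) ^ 2 ≤ v (toL Fq ξ - ξ') ∧
      v (toL Fq ξ - ξ') ≤ kabs Fq (polyToK Fq (a r * a (r + s))) /
          kabs Fq (polyToK Fq (qSeq Fq a (r + 1))) ^ 2 := by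
  exact stmt12_general hv hr hper hne hξ

end Ooto
end
end

section
/- Let n ≥ 1 be an integer and let ξ ∈ F_q((T^{-1})) be algebraic over F_q(T) of degree d. Then w_n(ξ) ≤ d − 1 and w_n*(ξ) ≤ d − 1. -/
open Polynomial Filter
open scoped ENNReal

noncomputable section

namespace Ooto

variable (Fq : Type) [Field Fq] [Fintype Fq]

/-!
Let `Q` be the minimal polynomial of `ξ`. If `P(ξ) ≠ 0`, the resultant of `Q` and `P` is a nonzero
element of `F_q[T]`, so it has absolute value at least `1`. On the other hand it equals
`lc(Q)ⁿ ∏ P(ξ')`, where `ξ'` runs over the `d` roots of `Q`, and each factor is `O(H(P))`.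
Bounding all factors but `P(ξ)` gives Liouville's inequality `|P(ξ)| ≫ H(P)^{-(d-1)}`, hence
`w_n(ξ) ≤ d - 1`, as only finitely many `P` have bounded degree and height.

Moreover `w_n*(ξ) ≤ w_n(ξ)` for every `ξ`: the height is the Gauss norm, whose multiplicativity lets
one divide the minimal polynomial `P` of `α` by `X - α` and obtain `|P(ξ)| ≪ H(α) |ξ - α|`. Only
finitely many `α` share a minimal polynomial, so infinitely many `α` yield infinitely many `P`.
-/

section GaussNorm

lemma gaussNorm_le_pow_mul_gaussNorm_one {R : Type*} [Semiring R] {v : AbsoluteValue R ℝ}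
    {c : ℝ} {p : R[X]} {n : ℕ} (hc : 1 ≤ c) (hp : p.natDegree ≤ n) :
    p.gaussNorm v c ≤ c ^ n * p.gaussNorm v 1 := by
  obtain ⟨i, hi⟩ := p.exists_eq_gaussNorm v c
  rw [hi]
  rcases le_or_gt i n with hin | hin
  · calc v (p.coeff i) * c ^ i ≤ p.gaussNorm v 1 * c ^ n := by
          gcongr
          · exact p.gaussNorm_nonneg v zero_le_one
          · simpa using p.le_gaussNorm v zero_le_one i
      _ = c ^ n * p.gaussNorm v 1 := mul_comm _ _
  · rw [coeff_eq_zero_of_natDegree_lt (hp.trans_lt hin), v.map_zero, zero_mul]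
    have := p.gaussNorm_nonneg v zero_le_one
    positivity

variable {E : Type*} [CommRing E] [Nontrivial E] {v : AbsoluteValue E ℝ} {p : E[X]}

lemma abv_eval_le_gaussNorm (hna : IsNonarchimedean v) {c : ℝ} {x : E} (hx : v x ≤ c) :
    v (p.eval x) ≤ p.gaussNorm v c := by
  have hc : 0 ≤ c := (v.nonneg x).trans hx
  obtain ⟨i, -, hi⟩ := hna.finset_image_add_of_nonempty (fun i ↦ p.coeff i * x ^ i)
    (Finset.nonempty_range_add_one (n := p.natDegree))
  calc v (p.eval x) ≤ v (p.coeff i * x ^ i) := by rwa [eval_eq_sum_range]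
    _ = v (p.coeff i) * v x ^ i := by rw [v.map_mul, map_pow]
    _ ≤ v (p.coeff i) * c ^ i := by gcongr
    _ ≤ p.gaussNorm v c := p.le_gaussNorm v hc i

lemma abv_eval_le_pow_mul_gaussNorm_one (hna : IsNonarchimedean v) {n : ℕ}
    (hp : p.natDegree ≤ n) (x : E) :
    v (p.eval x) ≤ max 1 (v x) ^ n * p.gaussNorm v 1 :=
  (abv_eval_le_gaussNorm hna (le_max_right 1 (v x))).trans
    (gaussNorm_le_pow_mul_gaussNorm_one (le_max_left 1 (v x)) hp)

lemma abv_eval_le_abv_sub_mul_of_isRoot (hna : IsNonarchimedean v) {n : ℕ} (hp : p.natDegree ≤ n)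
    {α : E} (hα : p.IsRoot α) (x : E) :
    v (p.eval x) ≤ v (x - α) * (max 1 (v x) ^ n * p.gaussNorm v 1) := by
  set c := max 1 (v x)
  have hc : 1 ≤ c := le_max_left 1 (v x)
  obtain ⟨q, rfl⟩ := dvd_iff_isRoot.mpr hα
  -- So dividing by `X - α` cannot increase the Gauss norm of radius `c`, however large `|α|` is.
  have one_le_factor : 1 ≤ (X - C α).gaussNorm v c := by
    have le_factor := (X - C α).le_gaussNorm v (zero_le_one.trans hc) 1
    simp only [coeff_sub, coeff_X_one, coeff_C_succ, sub_zero, AbsoluteValue.map_one, pow_one,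
      one_mul] at le_factor
    exact hc.trans le_factor
  calc v (((X - C α) * q).eval x) = v (x - α) * v (q.eval x) := by simp
    _ ≤ v (x - α) * q.gaussNorm v c := by
        gcongr
        exact abv_eval_le_gaussNorm hna (le_max_right 1 (v x))
    _ ≤ v (x - α) * ((X - C α) * q).gaussNorm v c := by
        rw [gaussNorm_mul hna (zero_lt_one.trans_le hc)]
        gcongr
        exact le_mul_of_one_le_left (q.gaussNorm_nonneg v (zero_le_one.trans hc)) one_le_factor
    _ ≤ v (x - α) * (c ^ n * ((X - C α) * q).gaussNorm v 1) := by
        gcongr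
        exact gaussNorm_le_pow_mul_gaussNorm_one hc hp

end GaussNorm

lemma finite_setOf_natDegree_le_of_coeff_mem {R : Type*} [Semiring R] (n : ℕ) {S : Set R}
    (hS : S.Finite) : {p : R[X] | p.natDegree ≤ n ∧ ∀ i, p.coeff i ∈ S}.Finite := by
  refine Set.Finite.of_injOn (f := fun p (i : Fin (n + 1)) ↦ p.coeff i)
    (t := {g | ∀ i : Fin (n + 1), g i ∈ S}) (fun p hp i ↦ hp.2 i) ?_ (Set.Finite.pi' fun _ ↦ hS)
  intro p hp q hq hpq
  exact (ext_iff_natDegree_le hp.1 hq.1).mpr fun i hi ↦ congrFun hpq ⟨i, by lia⟩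

lemma dvd_of_eval₂_eq_zero {A E : Type*} [CommRing A] [IsDomain A] [IsGCDMonoid A] [Field E]
    {f : A →+* E} (hf : Function.Injective f) {p q : A[X]} (hq : Irreducible q) {r : E}
    (hqr : q.eval₂ f r = 0) (hpr : p.eval₂ f r = 0) : q ∣ p := by
  classical
  let ψ : FractionRing A →+* E := IsFractionRing.lift hf
  have eval₂_map_eq (g : A[X]) :
      (g.map (algebraMap A (FractionRing A))).eval₂ ψ r = g.eval₂ f r := by
    rw [eval₂_map]
    congr 1
    ext a
    exact IsFractionRing.lift_algebraMap hf a
  have hprim : q.IsPrimitive := hq.isPrimitive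
    (natDegree_pos_of_eval₂_root hq.ne_zero f hqr fun a ↦ (map_eq_zero_iff f hf).mp).ne'
  refine hprim.dvd_of_fraction_map_dvd_fraction_map (K := FractionRing A)
    ((EuclideanDomain.dvd_or_coprime _ _
      (hprim.irreducible_iff_irreducible_map_fraction_map.mp hq)).resolve_right fun hcop ↦ ?_)
  have := hcop.map (eval₂RingHom ψ r)
  rw [coe_eval₂RingHom, eval₂_map_eq, eval₂_map_eq, hqr, hpr] at this
  exact not_isCoprime_zero_zero this

section Liouville

variable {A E : Type*} [CommRing A] [Field E] {v : AbsoluteValue E ℝ} {f : A →+* E} {n : ℕ}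
  {q : A[X]}

lemma one_le_abv_leadingCoeff_pow_mul_prod_eval (hf : ∀ a, f a ≠ 0 → 1 ≤ v (f a))
    (hq : (q.map f).Splits) {p : A[X]} (hp : p.natDegree ≤ n)
    (hpq : ∀ r ∈ (q.map f).roots, (p.map f).eval r ≠ 0) (hq₀ : q.map f ≠ 0) :
    1 ≤ v (q.map f).leadingCoeff ^ n *
      ((q.map f).roots.map fun r ↦ v ((p.map f).eval r)).prod := by
  have hres := resultant_eq_prod_eval (q.map f) (p.map f) n (natDegree_map_le.trans hp) hq
  have hres₀ : f (resultant q p (q.map f).natDegree n) ≠ 0 := by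
    rw [← resultant_map_map, hres]
    refine mul_ne_zero (pow_ne_zero n (leadingCoeff_ne_zero.mpr hq₀)) ?_
    simpa [Multiset.prod_eq_zero_iff] using hpq
  calc 1 ≤ v (f (resultant q p (q.map f).natDegree n)) := hf _ hres₀
    _ = _ := by
      rw [← resultant_map_map, hres, v.map_mul, map_pow, map_multiset_prod, Multiset.map_map]
      rfl

theorem exists_one_le_mul_abv_eval_of_mem_roots (hna : IsNonarchimedean v)
    (hf : ∀ a, f a ≠ 0 → 1 ≤ v (f a)) (hq : (q.map f).Splits) {x : E}
    (hx : x ∈ (q.map f).roots) (n : ℕ) :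
    ∃ C : ℝ, 0 ≤ C ∧ ∀ p : A[X], p.natDegree ≤ n →
      (∀ r ∈ (q.map f).roots, (p.map f).eval r ≠ 0) →
      1 ≤ C * (p.map f).gaussNorm v 1 ^ ((q.map f).natDegree - 1) * v ((p.map f).eval x) := by
  classical
  set s := (q.map f).roots.erase x with hs
  refine ⟨v (q.map f).leadingCoeff ^ n * (s.map fun r ↦ max 1 (v r) ^ n).prod, ?_,
    fun p hp hpq ↦ ?_⟩
  · refine mul_nonneg (by positivity) (Multiset.prod_nonneg fun _ h ↦ ?_)
    obtain ⟨r, -, rfl⟩ := Multiset.mem_map.mp h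
    positivity
  have prod_eval_le : (s.map fun r ↦ v ((p.map f).eval r)).prod ≤
      (s.map fun r ↦ max 1 (v r) ^ n).prod *
        (p.map f).gaussNorm v 1 ^ ((q.map f).natDegree - 1) := by
    rw [hq.natDegree_eq_card_roots, ← Nat.pred_eq_sub_one, ← Multiset.card_erase_of_mem hx, ← hs,
      ← Multiset.prod_replicate, ← Multiset.map_const', ← Multiset.prod_map_mul]
    exact Multiset.prod_map_le_prod_map₀ _ _ (fun r _ ↦ v.nonneg _)
      fun r _ ↦ abv_eval_le_pow_mul_gaussNorm_one hna (natDegree_map_le.trans hp) r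
  have hq₀ : q.map f ≠ 0 := ne_zero_of_mem_roots hx
  calc 1 ≤ v (q.map f).leadingCoeff ^ n *
        (v ((p.map f).eval x) * (s.map fun r ↦ v ((p.map f).eval r)).prod) := by
        rw [hs, Multiset.prod_map_erase (f := fun r ↦ v ((p.map f).eval r)) hx]
        exact one_le_abv_leadingCoeff_pow_mul_prod_eval hf hq hp hpq hq₀
    _ ≤ v (q.map f).leadingCoeff ^ n * (v ((p.map f).eval x) *
        ((s.map fun r ↦ max 1 (v r) ^ n).prod *
          (p.map f).gaussNorm v 1 ^ ((q.map f).natDegree - 1))) := by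
        gcongr
    _ = _ := by ring

end Liouville

section Algebraic

variable {Fq}

omit [Fintype Fq]

lemma polyToK_monomial (m : ℕ) (c : Fq) :
    polyToK Fq (monomial m c) = HahnSeries.single (-(m : ℤ)) c := by
  simp [polyToK, TT, HahnSeries.single_pow, HahnSeries.C_apply]

lemma polyToK_coeff (a : Fq[X]) (k : ℕ) : (polyToK Fq a).coeff (-(k : ℤ)) = a.coeff k := by
  induction a using Polynomial.induction_on' with
  | add a b ha hb => simp [ha, hb]
  | monomial m c => simp [polyToK_monomial, HahnSeries.coeff_single, coeff_monomial, eq_comm]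

lemma polyToK_injective : Function.Injective (polyToK Fq) := fun a b hab ↦ by
  ext k
  rw [← polyToK_coeff, hab, polyToK_coeff]

lemma φ_injective : Function.Injective (φ Fq) :=
  (toL Fq).injective.comp polyToK_injective

lemma polyToK_order {a : Fq[X]} (ha : a ≠ 0) : (polyToK Fq a).order = -(a.natDegree : ℤ) := by
  have order_le : (polyToK Fq a).order ≤ -(a.natDegree : ℤ) := by
    apply HahnSeries.order_le_of_coeff_ne_zero
    rwa [polyToK_coeff, coeff_natDegree, leadingCoeff_ne_zero]
  obtain ⟨j, hj⟩ : ∃ j : ℕ, (polyToK Fq a).order = -(j : ℤ) :=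
    ⟨(-(polyToK Fq a).order).toNat, by lia⟩
  have coeff_ne_zero : a.coeff j ≠ 0 := by
    rw [← polyToK_coeff, ← hj, HahnSeries.coeff_order_eq_zero.ne]
    exact (map_ne_zero_iff _ polyToK_injective).mpr ha
  have := le_natDegree_of_ne_zero coeff_ne_zero
  lia

lemma minPolyPrim_spec {α : L Fq} (h : IsAlgElem Fq α) :
    IsMinPolyOf Fq (minPolyPrim Fq α) α := by
  rw [minPolyPrim, dif_pos h]
  exact h.choose_spec

lemma irreducible_minPolyPrim {α : L Fq} (h : IsAlgElem Fq α) : Irreducible (minPolyPrim Fq α) :=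
  (minPolyPrim_spec h).2.1

lemma evalL_minPolyPrim_self {α : L Fq} (h : IsAlgElem Fq α) :
    evalL Fq (minPolyPrim Fq α) α = 0 :=
  (minPolyPrim_spec h).2.2.2.2

lemma degAlg_pos {α : L Fq} (h : IsAlgElem Fq α) : 0 < degAlg Fq α :=
  (minPolyPrim_spec h).1

lemma evalL_toL (P : Fq[X][X]) (ξ : K Fq) : evalL Fq P (toL Fq ξ) = toL Fq (evalK Fq P ξ) :=
  (hom_eval₂ P (polyToK Fq) (toL Fq) ξ).symm

lemma eval_map_φ (P : Fq[X][X]) (x : L Fq) : (P.map (φ Fq)).eval x = evalL Fq P x :=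
  eval_map (φ Fq) x

lemma finite_setOf_evalL_eq_zero {P : Fq[X][X]} (hP : P ≠ 0) : {x | evalL Fq P x = 0}.Finite := by
  have := finite_setOfPred_isRoot ((Polynomial.map_ne_zero_iff φ_injective).mpr hP)
  simpa only [IsRoot.def, eval_map_φ] using this

lemma minPolyPrim_dvd_of_evalL_eq_zero {α x : L Fq} (hα : IsAlgElem Fq α)
    (hx : evalL Fq (minPolyPrim Fq α) x = 0) {P : Fq[X][X]} (hP : evalL Fq P x = 0) :
    minPolyPrim Fq α ∣ P :=
  dvd_of_eval₂_eq_zero φ_injective (irreducible_minPolyPrim hα) hx hP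

lemma evalL_eq_zero_of_dvd {P Q : Fq[X][X]} (h : Q ∣ P) {x : L Fq} (hx : evalL Fq Q x = 0) :
    evalL Fq P x = 0 :=
  zero_dvd_iff.mp (hx ▸ eval₂_dvd (φ Fq) x h)

lemma finite_setOf_evalL_minPolyPrim_eq_zero (x : L Fq) :
    {α | IsAlgElem Fq α ∧ evalL Fq (minPolyPrim Fq α) x = 0}.Finite := by
  refine Set.not_infinite.mp fun hinf ↦ ?_
  obtain ⟨β, hβ, hβx⟩ := hinf.nonempty
  refine hinf ((finite_setOf_evalL_eq_zero (irreducible_minPolyPrim hβ).ne_zero).subset ?_)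
  rintro α ⟨hα, hαx⟩
  exact evalL_eq_zero_of_dvd (minPolyPrim_dvd_of_evalL_eq_zero hα hαx hβx)
    (evalL_minPolyPrim_self hα)

lemma infinite_image_minPolyPrim {S : Set (L Fq)} (hS : S.Infinite)
    (halg : ∀ α ∈ S, IsAlgElem Fq α) : (minPolyPrim Fq '' S).Infinite := by
  refine fun hfin ↦ hS (Set.Finite.of_finite_fibers (minPolyPrim Fq) hfin ?_)
  rintro _ ⟨β, hβ, rfl⟩
  refine (finite_setOf_evalL_eq_zero (irreducible_minPolyPrim (halg β hβ)).ne_zero).subset ?_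
  rintro α ⟨hα, hαβ⟩
  rw [← Set.mem_singleton_iff.mp hαβ]
  exact evalL_minPolyPrim_self (halg α hα)

end Algebraic

section Exponents

variable {Fq}

lemma kabs_polyToK (a : Fq[X]) : kabs Fq (polyToK Fq a) = (cardPowDegree a : ℝ) := by
  rcases eq_or_ne a 0 with rfl | ha
  · simp [kabs]
  · simp [kabs, (map_ne_zero_iff _ polyToK_injective).mpr ha, polyToK_order ha,
      cardPowDegree_nonzero a ha]

lemma one_le_kabs_polyToK {a : Fq[X]} (ha : a ≠ 0) : 1 ≤ kabs Fq (polyToK Fq a) := by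
  rw [kabs_polyToK]
  exact_mod_cast (cardPowDegree.pos ha : 0 < cardPowDegree a)

lemma finite_setOf_kabs_polyToK_le (B : ℝ) : {a : Fq[X] | kabs Fq (polyToK Fq a) ≤ B}.Finite := by
  have one_lt_card : (1 : ℝ) < Fintype.card Fq := Nat.one_lt_cast.mpr Fintype.one_lt_card
  obtain ⟨m, hm⟩ := pow_unbounded_of_one_lt B one_lt_card
  refine (finite_setOf_natDegree_le_of_coeff_mem m Set.finite_univ).subset fun a ha ↦
    ⟨?_, fun _ ↦ Set.mem_univ _⟩
  rcases eq_or_ne a 0 with rfl | ha₀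
  · simp
  · have card_pow_lt : (Fintype.card Fq : ℝ) ^ a.natDegree < (Fintype.card Fq : ℝ) ^ m := by
      simpa [kabs_polyToK, cardPowDegree_nonzero a ha₀] using ha.trans_lt hm
    exact ((pow_lt_pow_iff_right₀ one_lt_card).mp card_pow_lt).le

lemma kabs_coeff_le_Hpoly (P : Fq[X][X]) (i : ℕ) :
    kabs Fq (polyToK Fq (P.coeff i)) ≤ Hpoly Fq P := by
  have bddAbove := (P.finite_range_coeff.image fun a ↦ kabs Fq (polyToK Fq a)).bddAbove
  rw [← Set.range_comp] at bddAbove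
  exact le_ciSup bddAbove i

lemma one_le_Hpoly {P : Fq[X][X]} (hP : P ≠ 0) : 1 ≤ Hpoly Fq P :=
  (one_le_kabs_polyToK (leadingCoeff_ne_zero.mpr hP)).trans (kabs_coeff_le_Hpoly P P.natDegree)

lemma Hpoly_nonneg (P : Fq[X][X]) : 0 ≤ Hpoly Fq P := by
  rcases eq_or_ne P 0 with rfl | hP
  · simp [Hpoly, kabs]
  · exact zero_le_one.trans (one_le_Hpoly hP)

lemma finite_setOf_Hpoly_le (n : ℕ) (B : ℝ) :
    {P : Fq[X][X] | P.natDegree ≤ n ∧ Hpoly Fq P ≤ B}.Finite :=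
  (finite_setOf_natDegree_le_of_coeff_mem n (finite_setOf_kabs_polyToK_le B)).subset
    fun P hP ↦ ⟨hP.1, fun i ↦ (kabs_coeff_le_Hpoly P i).trans hP.2⟩

lemma finite_setOf_Hpoly_rpow_le (n : ℕ) {ε : ℝ} (hε : 0 < ε) (C : ℝ) :
    {P : Fq[X][X] | P.natDegree ≤ n ∧ Hpoly Fq P ^ ε ≤ C}.Finite := by
  refine (finite_setOf_Hpoly_le n (C ^ ε⁻¹)).subset fun P hP ↦ ⟨hP.1, ?_⟩
  have hC : 0 ≤ C := (Real.rpow_nonneg (Hpoly_nonneg P) ε).trans hP.2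
  exact (Real.le_rpow_inv_iff_of_pos (Hpoly_nonneg P) hC hε).mpr hP.2

lemma kabs_pos {f : K Fq} : 0 < kabs Fq f ↔ f ≠ 0 := by
  rcases eq_or_ne f 0 with rfl | hf
  · simp [kabs]
  · simp only [kabs, hf, if_false, ne_eq, not_false_eq_true, iff_true]
    have := Fintype.card_pos (α := Fq)
    positivity

lemma one_le_Hpoly_of_kabs_evalK_pos {P : Fq[X][X]} {ξ : K Fq}
    (h : 0 < kabs Fq (evalK Fq P ξ)) : 1 ≤ Hpoly Fq P :=
  one_le_Hpoly fun hP ↦ kabs_pos.mp h (by rw [hP, evalK, eval₂_zero])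

theorem wExp_le_of_forall {n : ℕ} {ξ : K Fq} {C τ : ℝ} (hC : 0 ≤ C)
    (h : ∀ P : Fq[X][X], P.natDegree ≤ n → evalK Fq P ξ ≠ 0 →
      1 ≤ C * Hpoly Fq P ^ τ * kabs Fq (evalK Fq P ξ)) :
    wExp Fq n ξ ≤ (τ : EReal) := by
  refine sSup_le ?_
  rintro _ ⟨w, rfl, hw⟩
  rw [EReal.coe_le_coe_iff]
  by_contra! hτw
  refine hw ((finite_setOf_Hpoly_rpow_le n (sub_pos.mpr hτw) C).subset ?_)
  rintro P ⟨hdeg, hpos, hle⟩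
  have hH : 0 < Hpoly Fq P := zero_lt_one.trans_le (one_le_Hpoly_of_kabs_evalK_pos hpos)
  refine ⟨hdeg, ?_⟩
  calc Hpoly Fq P ^ (w - τ)
      ≤ Hpoly Fq P ^ (w - τ) * (C * Hpoly Fq P ^ τ * kabs Fq (evalK Fq P ξ)) :=
        le_mul_of_one_le_right (by positivity) (h P hdeg (kabs_pos.mp hpos))
    _ ≤ Hpoly Fq P ^ (w - τ) * (C * Hpoly Fq P ^ τ * Hpoly Fq P ^ (-w)) := by gcongr
    _ = C * Hpoly Fq P ^ ((w - τ) + τ + -w) := by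
        rw [Real.rpow_add hH, Real.rpow_add hH]
        ring
    _ = C := by simp

theorem le_wExp_of_infinite {n : ℕ} {ξ : K Fq} {C w : ℝ}
    (h : {P : Fq[X][X] | P.natDegree ≤ n ∧ 0 < kabs Fq (evalK Fq P ξ) ∧
      kabs Fq (evalK Fq P ξ) ≤ C * Hpoly Fq P ^ (-w)}.Infinite) :
    (w : EReal) ≤ wExp Fq n ξ := by
  refine EReal.ge_of_forall_gt_iff_ge.mp fun z hz ↦ le_sSup ⟨z, rfl, ?_⟩
  have hzw : 0 < w - z := sub_pos.mpr (EReal.coe_lt_coe_iff.mp hz)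
  refine (h.sdiff (finite_setOf_Hpoly_rpow_le n hzw C)).mono ?_
  rintro P ⟨⟨hdeg, hpos, hle⟩, hlarge⟩
  have hH : 0 < Hpoly Fq P := zero_lt_one.trans_le (one_le_Hpoly_of_kabs_evalK_pos hpos)
  have hC : C < Hpoly Fq P ^ (w - z) := not_le.mp fun hsmall ↦ hlarge ⟨hdeg, hsmall⟩
  refine ⟨hdeg, hpos, ?_⟩
  calc kabs Fq (evalK Fq P ξ) ≤ C * Hpoly Fq P ^ (-w) := hle
    _ ≤ Hpoly Fq P ^ (w - z) * Hpoly Fq P ^ (-w) := by gcongr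
    _ = Hpoly Fq P ^ (-z) := by rw [← Real.rpow_add hH]; ring_nf

variable {v : L Fq → ℝ}

/-- The extension `v` of `|·|` to the algebraic closure, bundled as a Mathlib absolute value. -/
def IsAbsExt.toAbsoluteValue (hv : IsAbsExt Fq v) : AbsoluteValue (L Fq) ℝ where
  toFun := v
  map_mul' := hv.map_mul
  nonneg' := hv.nonneg
  eq_zero' := hv.eq_zero_iff
  add_le' x y := (hv.add_le x y).trans (max_le_add_of_nonneg (hv.nonneg x) (hv.nonneg y))

lemma IsAbsExt.isNonarchimedean (hv : IsAbsExt Fq v) : IsNonarchimedean hv.toAbsoluteValue :=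
  hv.add_le

lemma IsAbsExt.one_le_of_ne_zero (hv : IsAbsExt Fq v) (a : Fq[X]) (ha : φ Fq a ≠ 0) :
    1 ≤ hv.toAbsoluteValue (φ Fq a) :=
  (one_le_kabs_polyToK ((map_ne_zero_iff _ φ_injective).mp ha)).trans_eq
    (hv.extends_kabs (polyToK Fq a)).symm

lemma IsAbsExt.gaussNorm_map_φ (hv : IsAbsExt Fq v) (P : Fq[X][X]) :
    (P.map (φ Fq)).gaussNorm hv.toAbsoluteValue 1 = Hpoly Fq P := by
  rw [← gaussNorm_coe_powerSeries _ _ zero_le_one]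
  simp only [PowerSeries.gaussNorm_eq, coeff_coe, coeff_map, one_pow, mul_one]
  exact iSup_congr fun i ↦ hv.extends_kabs (polyToK Fq (P.coeff i))

lemma IsAbsExt.apply_evalL_minPolyPrim_le (hv : IsAbsExt Fq v) {α : L Fq} (hα : IsAlgElem Fq α)
    {n : ℕ} (hn : degAlg Fq α ≤ n) (x : L Fq) :
    v (evalL Fq (minPolyPrim Fq α) x) ≤ v (x - α) * (max 1 (v x) ^ n * heightAlg Fq α) := by
  have hroot : ((minPolyPrim Fq α).map (φ Fq)).IsRoot α := by
    rw [IsRoot.def, eval_map_φ]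
    exact evalL_minPolyPrim_self hα
  have := abv_eval_le_abv_sub_mul_of_isRoot hv.isNonarchimedean (natDegree_map_le.trans hn) hroot x
  rwa [hv.gaussNorm_map_φ, eval_map_φ] at this

theorem wStarExp_le_wExp (hv : IsAbsExt Fq v) (n : ℕ) (ξ : K Fq) :
    wStarExp Fq v n ξ ≤ wExp Fq n ξ := by
  refine sSup_le ?_
  rintro _ ⟨w, rfl, hinf⟩
  have hinf' := infinite_image_minPolyPrim
    (hinf.sdiff (finite_setOf_evalL_minPolyPrim_eq_zero (toL Fq ξ))) fun α hα ↦ hα.1.1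
  refine le_wExp_of_infinite (C := max 1 (v (toL Fq ξ)) ^ n) (hinf'.mono ?_)
  rintro _ ⟨α, ⟨⟨hα, hdeg, -, hle⟩, hξ⟩, rfl⟩
  have hH : 0 < heightAlg Fq α :=
    zero_lt_one.trans_le (one_le_Hpoly (irreducible_minPolyPrim hα).ne_zero)
  have eval_ne_zero : evalK Fq (minPolyPrim Fq α) ξ ≠ 0 := fun h₀ ↦
    hξ ⟨hα, by rw [evalL_toL, h₀, map_zero]⟩
  refine ⟨hdeg, kabs_pos.mpr eval_ne_zero, ?_⟩
  calc kabs Fq (evalK Fq (minPolyPrim Fq α) ξ)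
      = v (evalL Fq (minPolyPrim Fq α) (toL Fq ξ)) := by rw [evalL_toL, hv.extends_kabs]
    _ ≤ v (toL Fq ξ - α) * (max 1 (v (toL Fq ξ)) ^ n * heightAlg Fq α) :=
        hv.apply_evalL_minPolyPrim_le hα hdeg _
    _ ≤ heightAlg Fq α ^ (-w - 1) * (max 1 (v (toL Fq ξ)) ^ n * heightAlg Fq α) := by gcongr
    _ = max 1 (v (toL Fq ξ)) ^ n * heightAlg Fq α ^ (-w) := by
        rw [Real.rpow_sub_one hH.ne']
        field_simp

theorem exists_one_le_mul_kabs_evalK (hv : IsAbsExt Fq v) {ξ : K Fq}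
    (hξ : IsAlgElem Fq (toL Fq ξ)) (n : ℕ) :
    ∃ C : ℝ, 0 ≤ C ∧ ∀ P : Fq[X][X], P.natDegree ≤ n → evalK Fq P ξ ≠ 0 →
      1 ≤ C * Hpoly Fq P ^ (degAlg Fq (toL Fq ξ) - 1) * kabs Fq (evalK Fq P ξ) := by
  set Q := minPolyPrim Fq (toL Fq ξ)
  have hroot : evalL Fq Q (toL Fq ξ) = 0 := evalL_minPolyPrim_self hξ
  have mem_roots_iff (r : L Fq) : r ∈ (Q.map (φ Fq)).roots ↔ evalL Fq Q r = 0 := by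
    have hQ : Q.map (φ Fq) ≠ 0 :=
      (Polynomial.map_ne_zero_iff φ_injective).mpr (irreducible_minPolyPrim hξ).ne_zero
    rw [mem_roots hQ, IsRoot.def, eval_map_φ]
  obtain ⟨C, hC₀, hC⟩ := exists_one_le_mul_abv_eval_of_mem_roots hv.isNonarchimedean
    hv.one_le_of_ne_zero (IsAlgClosed.splits _) ((mem_roots_iff _).mpr hroot) n
  refine ⟨C, hC₀, fun P hdeg hP ↦ ?_⟩
  have hbound := hC P hdeg fun r hr hr₀ ↦ hP <| by
    rw [mem_roots_iff] at hr
    rw [eval_map_φ] at hr₀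
    have := evalL_eq_zero_of_dvd (minPolyPrim_dvd_of_evalL_eq_zero hξ hr hr₀) hroot
    rwa [evalL_toL, map_eq_zero] at this
  rw [hv.gaussNorm_map_φ, eval_map_φ, evalL_toL,
    natDegree_map_eq_of_injective φ_injective] at hbound
  exact hbound.trans_eq (by rw [← hv.extends_kabs]; rfl)

theorem wExp_le_degAlg_sub_one (hv : IsAbsExt Fq v) (n : ℕ) {ξ : K Fq}
    (hξ : IsAlgElem Fq (toL Fq ξ)) :
    wExp Fq n ξ ≤ (((degAlg Fq (toL Fq ξ) : ℝ) - 1 : ℝ) : EReal) := by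
  obtain ⟨C, hC₀, hC⟩ := exists_one_le_mul_kabs_evalK hv hξ n
  refine wExp_le_of_forall hC₀ fun P hdeg hP ↦ ?_
  rw [← Nat.cast_pred (degAlg_pos hξ), Real.rpow_natCast]
  exact hC P hdeg hP

end Exponents

theorem stmt15 (Fq : Type) [Field Fq] [Fintype Fq]
    (v : L Fq → ℝ) (hv : IsAbsExt Fq v)
    (n : ℕ) (hn : 1 ≤ n) (ξ : K Fq) (d : ℕ)
    (halg : IsAlgElem Fq (toL Fq ξ)) (hd : degAlg Fq (toL Fq ξ) = d) :
    wExp Fq n ξ ≤ (((d : ℝ) - 1 : ℝ) : EReal) ∧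
    wStarExp Fq v n ξ ≤ (((d : ℝ) - 1 : ℝ) : EReal) := by
  subst hd
  have hw := wExp_le_degAlg_sub_one hv n halg
  exact ⟨hw, (wStarExp_le_wExp hv n ξ).trans hw⟩

end Ooto
end
end
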